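/- arXiv:1808.03696 — 2 statements merged into one kernel-verified Lean document; each statement's English description precedes it below -/
import Mathlib

section
/- Let (G, u, v, U, V) be (3/2)-good, let x and y be two distinct isolated vertices of G, and let G′ be the graph obtained from G by adding the edge xy. Then there exist a pair of nonadjacent vertices a, b of G′ and disjoint vertex sets U′ ⊇ U and V′ ⊇ V such that (G′ + ab, u, v, U′, V′) is (3/2)-good. -/
open SimpleGraph

/-- The graph obtained from `G` by adding the edge `xy`. -/
def addEdge {α : Type*} (G : SimpleGraph α) (x y : α) : SimpleGraph α :=
  G ⊔ SimpleGraph.fromEdgeSet {s(x, y)}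

/-- `b_U = |V₁| + |U| − γ|V| − δ`, where `V₁ = V ∖ N_G(u)` and `δ = 1/(γ−1)`. -/
noncomputable def bU {α : Type*} (γ : ℝ) (G : SimpleGraph α) (u : α) (U V : Set α) : ℝ :=
  ((V \ G.neighborSet u).ncard : ℝ) + U.ncard - γ * V.ncard - 1 / (γ - 1)

/-- `b_V = |U₁| + |V| − γ|U| − δ`, where `U₁ = U ∖ N_G(v)` and `δ = 1/(γ−1)`. -/
noncomputable def bV {α : Type*} (γ : ℝ) (G : SimpleGraph α) (v : α) (U V : Set α) : ℝ :=
  ((U \ G.neighborSet v).ncard : ℝ) + V.ncard - γ * U.ncard - 1 / (γ - 1)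

/-- The tuple `(G, u, v, U, V)` is `γ`-good. -/
def GammaGood {α : Type*} (γ : ℝ) (G : SimpleGraph α) (u v : α) (U V : Set α) : Prop :=
  G.Adj u v ∧ u ∈ U ∧ v ∈ V ∧ Disjoint U V ∧
  -- (1*): exactly one connected component contains an edge, its vertex set is `U ∪ V`,
  -- and it is bipartite with parts `U` and `V` (both independent sets)
  (∃! c : G.ConnectedComponent, ∃ x y, G.Adj x y ∧ G.connectedComponentMk x = c) ∧
  {w | G.connectedComponentMk w = G.connectedComponentMk u} = U ∪ V ∧
  (∀ a ∈ U, ∀ b ∈ U, ¬ G.Adj a b) ∧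
  (∀ a ∈ V, ∀ b ∈ V, ¬ G.Adj a b) ∧
  -- (2*): every vertex of `U ∪ V` has a neighbor in `U₀ ∪ V₀ = N(v) ∪ N(u)`
  (∀ w ∈ U ∪ V, ∃ z ∈ G.neighborSet v ∪ G.neighborSet u, G.Adj w z) ∧
  -- (3*) and (4*)
  bU γ G u U V ≤ 0 ∧ bV γ G v U V ≤ 0 ∧ bU γ G u U V + bV γ G v U V ≤ -2

theorem good_swap {α : Type*} {γ : ℝ} {G : SimpleGraph α} {u v : α} {U V : Set α}
    (h : GammaGood γ G u v U V) : GammaGood γ G v u V U := by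
  obtain ⟨h1, h2, h3, h4, h5, h6, h7, h8, h9, h10, h11, h12⟩ := h
  refine ⟨h1.symm, h3, h2, h4.symm, h5, ?_, h8, h7, ?_, h11, h10, ?_⟩
  · rw [Set.union_comm V U, ← h6, SimpleGraph.ConnectedComponent.eq.2 h1.reachable]
  · intro w hw
    rw [Set.union_comm] at hw ⊢
    exact h9 w hw
  · have : bU γ G v V U + bV γ G u V U = bU γ G u U V + bV γ G v U V := by
      unfold bU bV; ring
    linarith

theorem addEdge_adj {α : Type*} (G : SimpleGraph α) (x y p q : α) :
    (addEdge G x y).Adj p q ↔ G.Adj p q ∨ (((p = x ∧ q = y) ∨ (p = y ∧ q = x)) ∧ p ≠ q) := by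
  simp [addEdge]

theorem good_core {α : Type*} [Fintype α]
    (G : SimpleGraph α) (u v : α) (U V : Set α)
    (hg : GammaGood (3 / 2) G u v U V)
    (x y : α) (hxy : x ≠ y)
    (hx : G.neighborSet x = ∅) (hy : G.neighborSet y = ∅)
    (hb : bV (3 / 2) G v U V ≤ -1) :
    x ≠ u ∧ ¬ (addEdge G x y).Adj x u ∧
      U ⊆ insert y U ∧ V ⊆ insert x V ∧ Disjoint (insert y U) (insert x V) ∧
        GammaGood (3 / 2) (addEdge (addEdge G x y) x u) u v (insert y U) (insert x V) := by
  obtain ⟨h1, h2, h3, h4, h5, h6, h7, h8, h9, h10, h11, h12⟩ := hg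
  have nx : ∀ z, ¬ G.Adj x z := fun z hz => by
    have : z ∈ G.neighborSet x := hz
    simp [hx] at this
  have ny : ∀ z, ¬ G.Adj y z := fun z hz => by
    have : z ∈ G.neighborSet y := hz
    simp [hy] at this
  have nx2 : ∀ z, ¬ G.Adj z x := fun z hz => nx z hz.symm
  have ny2 : ∀ z, ¬ G.Adj z y := fun z hz => ny z hz.symm
  have hxS : x ∉ U ∪ V := fun h => by
    obtain ⟨z, _, hz⟩ := h9 x h
    exact nx z hz
  have hyS : y ∉ U ∪ V := fun h => by
    obtain ⟨z, _, hz⟩ := h9 y h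
    exact ny z hz
  have hxU : x ∉ U := fun h => hxS (Or.inl h)
  have hxV : x ∉ V := fun h => hxS (Or.inr h)
  have hyU : y ∉ U := fun h => hyS (Or.inl h)
  have hyV : y ∉ V := fun h => hyS (Or.inr h)
  have hxu : x ≠ u := fun h => hxU (h ▸ h2)
  have hyu : y ≠ u := fun h => hyU (h ▸ h2)
  have hxv : x ≠ v := fun h => hxV (h ▸ h3)
  have hyv : y ≠ v := fun h => hyV (h ▸ h3)
  have huv : u ≠ v := h1.ne
  have hD : Disjoint (insert y U) (insert x V) := by
    rw [Set.disjoint_left] at h4 ⊢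
    rintro a (rfl | ha) (hb | hb)
    · exact hxy hb.symm
    · exact hyV hb
    · exact hxU (hb ▸ ha)
    · exact h4 ha hb
  have hedge : ∀ p q, G.Adj p q → p ∈ U ∪ V := by
    intro p q hpq
    rw [← h6]
    exact h5.unique ⟨p, q, hpq, rfl⟩ ⟨u, v, h1, rfl⟩
  set H := addEdge (addEdge G x y) x u with hH
  have hadj : ∀ p q, H.Adj p q ↔ G.Adj p q ∨ (p = x ∧ q = y) ∨ (p = y ∧ q = x) ∨
      (p = x ∧ q = u) ∨ (p = u ∧ q = x) := by
    intro p q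
    rw [hH, addEdge_adj, addEdge_adj]
    clear * - hxy hxu
    grind
  have hle : G ≤ H := fun p q h => (hadj p q).2 (Or.inl h)
  have hxuH : H.Adj x u := (hadj _ _).2 (by simp)
  have hyxH : H.Adj y x := (hadj _ _).2 (by simp)
  have hedgeH : ∀ p q, H.Adj p q → p ∈ insert y U ∪ insert x V := by
    intro p q hpq
    rw [hadj] at hpq
    have := hedge p q
    simp only [Set.mem_union, Set.mem_insert_iff] at this ⊢
    grind
  have hreach : ∀ w ∈ insert y U ∪ insert x V, H.Reachable w u := by
    have hG : ∀ w ∈ U ∪ V, H.Reachable w u := by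
      intro w hw
      rw [← h6] at hw
      exact (SimpleGraph.ConnectedComponent.eq.1 hw).mono hle
    rintro w ((rfl | hw) | (rfl | hw))
    · exact hyxH.reachable.trans hxuH.reachable
    · exact hG w (Or.inl hw)
    · exact hxuH.reachable
    · exact hG w (Or.inr hw)
  have hcomp : {w | H.connectedComponentMk w = H.connectedComponentMk u}
      = insert y U ∪ insert x V := by
    ext w
    constructor
    · intro hw
      obtain ⟨p⟩ := SimpleGraph.ConnectedComponent.eq.1 hw
      cases p with
      | nil => exact Or.inl (Or.inr h2)
      | cons h _ => exact hedgeH _ _ h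
    · intro hw
      exact SimpleGraph.ConnectedComponent.eq.2 (hreach w hw)
  have hNu : insert x V \ H.neighborSet u = V \ G.neighborSet u := by
    ext w
    simp only [Set.mem_diff, Set.mem_insert_iff, SimpleGraph.mem_neighborSet, hadj]
    grind
  have hNv : insert y U \ H.neighborSet v = insert y (U \ G.neighborSet v) := by
    ext w
    simp only [Set.mem_diff, Set.mem_insert_iff, SimpleGraph.mem_neighborSet, hadj]
    grind
  have cU : (insert y U).ncard = U.ncard + 1 := Set.ncard_insert_of_notMem hyU (Set.toFinite _)
  have cV : (insert x V).ncard = V.ncard + 1 := Set.ncard_insert_of_notMem hxV (Set.toFinite _)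
  have cU1 : (insert y (U \ G.neighborSet v)).ncard = (U \ G.neighborSet v).ncard + 1 :=
    Set.ncard_insert_of_notMem (fun h => hyU h.1) (Set.toFinite _)
  have eU : bU (3 / 2) H u (insert y U) (insert x V) = bU (3 / 2) G u U V - 1 / 2 := by
    unfold bU
    rw [hNu, cU, cV]
    push_cast
    ring
  have eV : bV (3 / 2) H v (insert y U) (insert x V) = bV (3 / 2) G v U V + 1 / 2 := by
    unfold bV
    rw [hNv, cU, cV, cU1]
    push_cast
    ring
  refine ⟨hxu, ?_, Set.subset_insert _ _, Set.subset_insert _ _, hD,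
    hle h1, Or.inr h2, Or.inr h3, hD, ?_, hcomp, ?_, ?_, ?_, ?_, ?_, ?_⟩
  · rw [addEdge_adj]
    grind
  · refine ⟨H.connectedComponentMk u, ⟨u, v, hle h1, rfl⟩, ?_⟩
    rintro c ⟨p, q, hpq, rfl⟩
    exact SimpleGraph.ConnectedComponent.eq.2 (hreach p (hedgeH p q hpq))
  · intro a ha b hb
    simp only [Set.mem_insert_iff] at ha hb
    rw [hadj]
    have := h7 a
    grind
  · have huV : u ∉ V := Set.disjoint_left.1 h4 h2
    intro a ha b hb
    simp only [Set.mem_insert_iff] at ha hb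
    rw [hadj]
    have := h8 a
    grind
  · have hG : ∀ w ∈ U ∪ V, ∃ z ∈ H.neighborSet v ∪ H.neighborSet u, H.Adj w z := by
      intro w hw
      obtain ⟨z, hz, hwz⟩ := h9 w hw
      exact ⟨z, hz.imp (fun h => hle h) (fun h => hle h), hle hwz⟩
    rintro w ((rfl | hw) | (rfl | hw))
    · exact ⟨x, Or.inr hxuH.symm, hyxH⟩
    · exact hG w (Or.inl hw)
    · exact ⟨u, Or.inl (hle h1.symm), hxuH⟩
    · exact hG w (Or.inr hw)
  · linarith
  · linarith
  · linarith

theorem stmt_16 {α : Type*} [Fintype α]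
    (G : SimpleGraph α) (u v : α) (U V : Set α)
    (hg : GammaGood (3 / 2) G u v U V)
    (x y : α) (hxy : x ≠ y)
    (hx : G.neighborSet x = ∅) (hy : G.neighborSet y = ∅) :
    ∃ a b : α, a ≠ b ∧ ¬ (addEdge G x y).Adj a b ∧
      ∃ U' V' : Set α, U ⊆ U' ∧ V ⊆ V' ∧ Disjoint U' V' ∧
        GammaGood (3 / 2) (addEdge (addEdge G x y) a b) u v U' V' := by
  by_cases hb : bV (3 / 2) G v U V ≤ -1
  · obtain ⟨h1, h2, h3, h4, h5, h6⟩ := good_core G u v U V hg x y hxy hx hy hb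
    exact ⟨x, u, h1, h2, _, _, h3, h4, h5, h6⟩
  · have hs := good_swap hg
    have e : bV (3 / 2) G u V U ≤ -1 := by
      have h := hg.2.2.2.2.2.2.2.2.2.2.2
      have e2 : bV (3 / 2) G u V U = bU (3 / 2) G u U V := rfl
      linarith
    obtain ⟨h1, h2, h3, h4, h5, h6⟩ := good_core G v u V U hs x y hxy hx hy e
    exact ⟨x, v, h1, h2, _, _, h4, h3, h5.symm, good_swap h6⟩
end

section
/- Let 1 < γ ≤ 2, δ = 1/(γ−1), and let (G, u, v, U, V) be γ-good. Let x ∈ V, let y be a vertex not in U ∪ V, let G′ be the graph obtained from G by adding the edge xy, and set U′ = U ∪ {y}, U₁′ = U′ ∖ N_{G′}(v) and V₁ = V ∖ N_{G′}(u). Suppose U₁′ ∪ V₁ ≠ ∅, |U′| ≤ γ|V| + δ, and |V| ≤ γ|U′| + δ. Then there exists a pair of nonadjacent vertices a, b of G′ such that (G′ + ab, u, v, U′, V) is γ-good. -/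
open SimpleGraph

theorem addEdge_adj_aux {α : Type*} (G : SimpleGraph α) (x y a b : α) :
    (addEdge G x y).Adj a b ↔ G.Adj a b ∨ (((a = x ∧ b = y) ∨ (a = y ∧ b = x)) ∧ a ≠ b) := by
  simp [addEdge]

/-- Bipartite structure extracted from (1*). -/
theorem edges_aux {α : Type*} (γ : ℝ) (G : SimpleGraph α) (u v : α) (U V : Set α)
    (hg : GammaGood γ G u v U V) :
    (∀ a b, G.Adj a b → (a ∈ U ∧ b ∈ V) ∨ (a ∈ V ∧ b ∈ U)) ∧
    (∀ w ∈ U ∪ V, G.Reachable w u) := by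
  obtain ⟨huv, hu, hv, hd, hc, hcomp, hU, hV, -⟩ := hg
  have key : ∀ a b, G.Adj a b → a ∈ U ∪ V := by
    intro a b hab
    have := hc.unique (y₁ := G.connectedComponentMk a) (y₂ := G.connectedComponentMk u)
      ⟨a, b, hab, rfl⟩ ⟨u, v, huv, rfl⟩
    rw [← hcomp]; exact this
  refine ⟨?_, ?_⟩
  · intro a b hab
    rcases key a b hab with ha | ha <;> rcases key b a hab.symm with hb | hb
    · exact absurd hab (hU a ha b hb)
    · exact Or.inl ⟨ha, hb⟩
    · exact Or.inr ⟨ha, hb⟩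
    · exact absurd hab (hV a ha b hb)
  · intro w hw
    rw [← hcomp] at hw
    exact SimpleGraph.ConnectedComponent.exact hw

theorem good_aux {α : Type*} (γ : ℝ) (G : SimpleGraph α) (u v : α) (U V : Set α)
    (huv : G.Adj u v) (hu : u ∈ U) (hv : v ∈ V) (hd : Disjoint U V)
    (hE : ∀ a b, G.Adj a b → (a ∈ U ∧ b ∈ V) ∨ (a ∈ V ∧ b ∈ U))
    (hR : ∀ w ∈ U ∪ V, G.Reachable w u)
    (h2 : ∀ w ∈ U ∪ V, ∃ z ∈ G.neighborSet v ∪ G.neighborSet u, G.Adj w z)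
    (hb1 : bU γ G u U V ≤ 0) (hb2 : bV γ G v U V ≤ 0)
    (hb3 : bU γ G u U V + bV γ G v U V ≤ -2) : GammaGood γ G u v U V := by
  have hd' : ∀ a, a ∈ U → a ∈ V → False := fun a h h' => Set.disjoint_left.1 hd h h'
  have hE' : ∀ a b, G.Adj a b → a ∈ U ∪ V := by
    intro a b hab
    rcases hE a b hab with h | h
    · exact Or.inl h.1
    · exact Or.inr h.1
  refine ⟨huv, hu, hv, hd, ?_, ?_, ?_, ?_, h2, hb1, hb2, hb3⟩
  · refine ⟨G.connectedComponentMk u, ⟨u, v, huv, rfl⟩, ?_⟩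
    rintro c ⟨a, b, hab, rfl⟩
    exact SimpleGraph.ConnectedComponent.sound (hR a (hE' a b hab))
  · ext w
    constructor
    · intro hw
      have hr : G.Reachable w u := SimpleGraph.ConnectedComponent.exact hw
      obtain ⟨p⟩ := hr
      cases p with
      | nil => exact Or.inl hu
      | cons h _ => exact hE' _ _ h
    · intro hw
      exact SimpleGraph.ConnectedComponent.sound (hR w hw)
  · intro a ha b hb hab
    rcases hE a b hab with h | h
    · exact hd' b hb h.2
    · exact hd' a ha h.1
  · intro a ha b hb hab
    rcases hE a b hab with h | h
    · exact hd' a h.1 ha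
    · exact hd' b h.2 hb

theorem main_aux {α : Type*} (γ : ℝ)
    (G : SimpleGraph α) (u v : α) (U V : Set α)
    (hg : GammaGood γ G u v U V)
    (x y : α) (hx : x ∈ V) (hy : y ∉ U ∪ V) (a b : α) (ha : a ∈ U ∪ {y}) (hb : b ∈ V)
    (hxu : (addEdge (addEdge G x y) a b).Adj u x)
    (hb1 : bU γ (addEdge (addEdge G x y) a b) u (U ∪ {y}) V ≤ 0)
    (hb2 : bV γ (addEdge (addEdge G x y) a b) v (U ∪ {y}) V ≤ 0)
    (hb3 : bU γ (addEdge (addEdge G x y) a b) u (U ∪ {y}) V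
      + bV γ (addEdge (addEdge G x y) a b) v (U ∪ {y}) V ≤ -2) :
    GammaGood γ (addEdge (addEdge G x y) a b) u v (U ∪ {y}) V := by
  obtain ⟨hE, hR⟩ := edges_aux γ G u v U V hg
  obtain ⟨huv, hu, hv, hd, hc, hcomp, hU, hV, h2, -⟩ := hg
  have hle : G ≤ addEdge (addEdge G x y) a b := le_trans le_sup_left le_sup_left
  have hyV : y ∉ V := fun h => hy (Or.inr h)
  have hxy : (addEdge (addEdge G x y) a b).Adj y x := by
    rw [addEdge_adj_aux, addEdge_adj_aux]
    exact Or.inl (Or.inr ⟨Or.inr ⟨rfl, rfl⟩, fun h => hyV (h ▸ hx)⟩)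
  refine good_aux γ _ u v _ V (hle huv) (Or.inl hu) hv ?_ ?_ ?_ ?_ hb1 hb2 hb3
  · rw [Set.disjoint_union_left]
    exact ⟨hd, Set.disjoint_singleton_left.2 hyV⟩
  · intro c d hcd
    rw [addEdge_adj_aux, addEdge_adj_aux] at hcd
    have hyy : y ∈ U ∪ {y} := Or.inr rfl
    rcases hcd with (h | ⟨⟨rfl, rfl⟩ | ⟨rfl, rfl⟩, -⟩) | ⟨⟨rfl, rfl⟩ | ⟨rfl, rfl⟩, -⟩
    · rcases hE c d h with h | h
      · exact Or.inl ⟨Or.inl h.1, h.2⟩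
      · exact Or.inr ⟨h.1, Or.inl h.2⟩
    · exact Or.inr ⟨hx, hyy⟩
    · exact Or.inl ⟨hyy, hx⟩
    · exact Or.inl ⟨ha, hb⟩
    · exact Or.inr ⟨hb, ha⟩
  · rintro w ((hw | rfl) | hw)
    · exact (hR w (Or.inl hw)).mono hle
    · exact hxy.reachable.trans ((hR x (Or.inr hx)).mono hle)
    · exact (hR w (Or.inr hw)).mono hle
  · have old : ∀ w ∈ U ∪ V, ∃ z ∈ (addEdge (addEdge G x y) a b).neighborSet v ∪
        (addEdge (addEdge G x y) a b).neighborSet u,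
        (addEdge (addEdge G x y) a b).Adj w z := by
      intro w hw
      obtain ⟨z, hz, hwz⟩ := h2 w hw
      refine ⟨z, ?_, hle hwz⟩
      rcases hz with hz | hz
      · exact Or.inl (hle hz)
      · exact Or.inr (hle hz)
    rintro w ((hw | rfl) | hw)
    · exact old w (Or.inl hw)
    · exact ⟨x, Or.inr hxu, hxy⟩
    · exact old w (Or.inr hw)

theorem stmt_19 {α : Type*} [Fintype α] (γ : ℝ) (hγ1 : 1 < γ) (hγ2 : γ ≤ 2)
    (G : SimpleGraph α) (u v : α) (U V : Set α)
    (hg : GammaGood γ G u v U V)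
    (x y : α) (hx : x ∈ V) (hy : y ∉ U ∪ V)
    (hne : ((U ∪ {y}) \ (addEdge G x y).neighborSet v) ∪
        (V \ (addEdge G x y).neighborSet u) ≠ ∅)
    (h1 : ((U ∪ {y}).ncard : ℝ) ≤ γ * V.ncard + 1 / (γ - 1))
    (h2 : (V.ncard : ℝ) ≤ γ * (U ∪ {y}).ncard + 1 / (γ - 1)) :
    ∃ a b : α, a ≠ b ∧ ¬ (addEdge G x y).Adj a b ∧
      GammaGood γ (addEdge (addEdge G x y) a b) u v (U ∪ {y}) V := by
  have hg0 := hg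
  obtain ⟨huv, hu, hv, hd, -, -, -, -, -, hb1, hb2, hb3⟩ := hg0
  have hd' : ∀ a, a ∈ U → a ∈ V → False := fun a h h' => Set.disjoint_left.1 hd h h'
  have hyU : y ∉ U := fun h => hy (Or.inl h)
  have hyV : y ∉ V := fun h => hy (Or.inr h)
  have hcard : (U ∪ {y}).ncard = U.ncard + 1 := by
    rw [Set.union_singleton, Set.ncard_insert_of_notMem hyU]
  have hux : u ≠ x := fun h => hd' u hu (h ▸ hx)
  have huy : u ≠ y := fun h => hyU (h ▸ hu)
  have hNu : ∀ z, (addEdge G x y).Adj u z ↔ G.Adj u z := by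
    intro z; rw [addEdge_adj_aux]; simp [hux, huy]
  have hU1 : ((U ∪ {y}) \ (addEdge G x y).neighborSet v).ncard
      ≤ (U \ G.neighborSet v).ncard + 1 := by
    refine le_trans (Set.ncard_le_ncard (t := insert y (U \ G.neighborSet v)) ?_)
      (Set.ncard_insert_le _ _)
    rintro z ⟨hz | hz, hzn⟩
    · exact Or.inr ⟨hz, fun h => hzn (Or.inl h)⟩
    · exact Or.inl hz
  by_cases hV1 : (V \ G.neighborSet u).Nonempty
  · obtain ⟨b, hb, hbx⟩ : ∃ b ∈ V \ G.neighborSet u, G.Adj u x ∨ b = x := by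
      by_cases h : G.Adj u x
      · obtain ⟨b, hb⟩ := hV1
        exact ⟨b, hb, Or.inl h⟩
      · exact ⟨x, ⟨hx, h⟩, Or.inr rfl⟩
    have hub : u ≠ b := fun h => hd' u hu (h ▸ hb.1)
    have hVc : (V \ (addEdge (addEdge G x y) u b).neighborSet u).ncard + 1
        ≤ (V \ G.neighborSet u).ncard := by
      rw [← Set.ncard_sdiff_singleton_add_one hb]
      refine Nat.add_le_add_right (Set.ncard_le_ncard ?_) 1
      rintro z ⟨hz, hzn⟩
      refine ⟨⟨hz, fun h => hzn (Or.inl (Or.inl h))⟩, ?_⟩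
      rintro rfl
      apply hzn
      change (addEdge (addEdge G x y) u z).Adj u z
      rw [addEdge_adj_aux]
      exact Or.inr ⟨Or.inl ⟨rfl, rfl⟩, hub⟩
    have hUc : ((U ∪ {y}) \ (addEdge (addEdge G x y) u b).neighborSet v).ncard
        ≤ (U \ G.neighborSet v).ncard + 1 := by
      refine le_trans (Set.ncard_le_ncard ?_) hU1
      rintro z ⟨hz, hzn⟩
      exact ⟨hz, fun h => hzn (Or.inl h)⟩
    have hVc' : ((V \ (addEdge (addEdge G x y) u b).neighborSet u).ncard : ℝ) + 1
        ≤ (V \ G.neighborSet u).ncard := by exact_mod_cast hVc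
    have hUc' : (((U ∪ {y}) \ (addEdge (addEdge G x y) u b).neighborSet v).ncard : ℝ)
        ≤ (U \ G.neighborSet v).ncard + 1 := by exact_mod_cast hUc
    refine ⟨u, b, hub, ?_, main_aux γ G u v U V hg x y hx hy u b (Or.inl hu) hb.1 ?_ ?_ ?_ ?_⟩
    · rw [hNu]; exact hb.2
    · rw [addEdge_adj_aux, hNu]
      rcases hbx with h | h
      · exact Or.inl h
      · exact Or.inr ⟨Or.inl ⟨rfl, h.symm⟩, hux⟩
    all_goals
      simp only [bU, bV, hcard, Nat.cast_add, Nat.cast_one] at *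
      linarith
  · have hVe : V \ G.neighborSet u = ∅ := Set.not_nonempty_iff_eq_empty.1 hV1
    have hVe' : ∀ z ∈ V, G.Adj u z := by
      intro z hz
      by_contra h
      exact hV1 ⟨z, hz, h⟩
    obtain ⟨c, hc⟩ := Set.nonempty_iff_ne_empty.2 hne
    have hc : c ∈ (U ∪ {y}) \ (addEdge G x y).neighborSet v := by
      rcases hc with hc | hc
      · exact hc
      · exact absurd ((hNu c).2 (hVe' c hc.1)) hc.2
    have hcv : c ≠ v := by
      rintro rfl
      rcases hc.1 with h | h
      · exact hd' _ h hv
      · exact hyV (h ▸ hv)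
    have hVc : V \ (addEdge (addEdge G x y) c v).neighborSet u = ∅ := by
      ext z
      simp only [Set.mem_sdiff, Set.mem_empty_iff_false, iff_false, not_and, not_not]
      intro hz
      exact Or.inl (Or.inl (hVe' z hz))
    have hUc : ((U ∪ {y}) \ (addEdge (addEdge G x y) c v).neighborSet v).ncard
        ≤ (U \ G.neighborSet v).ncard := by
      have : ((U ∪ {y}) \ (addEdge (addEdge G x y) c v).neighborSet v).ncard + 1
          ≤ ((U ∪ {y}) \ (addEdge G x y).neighborSet v).ncard := by
        rw [← Set.ncard_sdiff_singleton_add_one hc]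
        refine Nat.add_le_add_right (Set.ncard_le_ncard ?_) 1
        rintro z ⟨hz, hzn⟩
        refine ⟨⟨hz, fun h => hzn (Or.inl h)⟩, ?_⟩
        rintro rfl
        apply hzn
        change (addEdge (addEdge G x y) z v).Adj v z
        rw [addEdge_adj_aux]
        exact Or.inr ⟨Or.inr ⟨rfl, rfl⟩, hcv.symm⟩
      omega
    have hUc' : (((U ∪ {y}) \ (addEdge (addEdge G x y) c v).neighborSet v).ncard : ℝ)
        ≤ (U \ G.neighborSet v).ncard := by exact_mod_cast hUc
    refine ⟨c, v, hcv, fun h => hc.2 h.symm,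
      main_aux γ G u v U V hg x y hx hy c v hc.1 hv (Or.inl (Or.inl (hVe' x hx))) ?_ ?_ ?_⟩
    all_goals
      simp only [bU, bV, hcard, hVc, hVe, Set.ncard_empty, Nat.cast_zero,
        Nat.cast_add, Nat.cast_one] at *
      linarith
end
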